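/- arXiv:2602.17504 — 5 statements merged into one kernel-verified Lean document; each statement's English description precedes it below -/
import Mathlib

section
/- Let B, a, ε, D, z be as in the gain-design setup, and let k ∈ ℝ³ with k_i ≥ 0 for all i satisfy (I − D)k = z. Let Ξ be any 3×3 real matrix with |Ξ_ij| ≤ B_ij for all i, j, and let ι ∈ ℝ³ satisfy |ι_i| ≤ a_i for all i. Then for every i ∈ {1,2,3}: −(1 + Ξ_ii)·k_i + Σ_{j≠i} |Ξ_ij|·k_j + |ι_i| ≤ −ε_i. -/
/-!
`D` is the Jacobi iteration matrix of `1 - B`: dividing row `i` of `1 - B` by its diagonal entry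
`1 - B i i` turns it into row `i` of `1 - D`. Hence `(1 - D) k = z` says that `(1 - B) k = a + ε`.
For `k ≥ 0`, the left-hand side of the gain inequality is largest at the worst case
`Ξ i i = -B i i`, `|Ξ i j| = B i j`, `|ι i| = a i`, where it is `-((1 - B) k) i + a i = -ε i`.
-/

section

open Finset
open scoped Matrix

variable {n R : Type*} [Fintype n] [DecidableEq n]

theorem one_sub_mulVec_apply_eq_sub_sum_erase [Ring R] (A : Matrix n n R) (v : n → R) (i : n) :
    ((1 - A) *ᵥ v) i = (1 - A i i) * v i - ∑ j ∈ univ.erase i, A i j * v j := by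
  have hsplit : A i i * v i + ∑ j ∈ univ.erase i, A i j * v j = (A *ᵥ v) i :=
    add_sum_erase univ (fun j => A i j * v j) (mem_univ i)
  rw [Matrix.sub_mulVec, Matrix.one_mulVec, Pi.sub_apply, ← hsplit, sub_mul, one_mul,
    sub_add_eq_sub_sub]

theorem one_sub_mulVec_apply_eq_div [Field R] {B D : Matrix n n R} {i : n} (hB : B i i ≠ 1)
    (hD : ∀ j, D i j = if i = j then 0 else B i j / (1 - B i i)) (v : n → R) :
    ((1 - D) *ᵥ v) i = ((1 - B) *ᵥ v) i / (1 - B i i) := by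
  have hsum : ∑ j ∈ univ.erase i, D i j * v j =
      (∑ j ∈ univ.erase i, B i j * v j) / (1 - B i i) := by
    rw [sum_div]
    refine sum_congr rfl fun j hj => ?_
    rw [hD, if_neg (ne_of_mem_erase hj).symm, div_mul_eq_mul_div]
  have hdiag : D i i = 0 := by rw [hD, if_pos rfl]
  rw [one_sub_mulVec_apply_eq_sub_sum_erase, one_sub_mulVec_apply_eq_sub_sum_erase, hsum, hdiag,
    sub_zero, one_mul, sub_div, mul_div_cancel_left₀ _ (sub_ne_zero.mpr hB.symm)]

theorem neg_one_add_mul_add_sum_abs_le_neg_one_sub_mulVec [Ring R] [LinearOrder R]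
    [IsOrderedRing R] {B Ξ : Matrix n n R} {v : n → R} {i : n} (hv : ∀ j, 0 ≤ v j)
    (hΞ : ∀ j, |Ξ i j| ≤ B i j) :
    -(1 + Ξ i i) * v i + ∑ j ∈ univ.erase i, |Ξ i j| * v j ≤ -((1 - B) *ᵥ v) i := by
  have hdiag : 1 - B i i ≤ 1 + Ξ i i := by
    rw [sub_eq_add_neg]
    gcongr
    exact neg_le_of_abs_le (hΞ i)
  calc -(1 + Ξ i i) * v i + ∑ j ∈ univ.erase i, |Ξ i j| * v j
      ≤ -(1 - B i i) * v i + ∑ j ∈ univ.erase i, B i j * v j :=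
        add_le_add (mul_le_mul_of_nonneg_right (neg_le_neg hdiag) (hv i))
          (sum_le_sum fun j _ => mul_le_mul_of_nonneg_right (hΞ j) (hv j))
    _ = -((1 - B) *ᵥ v) i := by
        rw [one_sub_mulVec_apply_eq_sub_sum_erase, neg_mul, neg_sub, neg_add_eq_sub]

theorem stmt_2_general [Field R] [LinearOrder R] [IsStrictOrderedRing R]
    {B D Ξ : Matrix n n R} {a ε z k ι : n → R} (hB : ∀ i, B i i < 1)
    (hD : ∀ i j, D i j = if i = j then 0 else B i j / (1 - B i i))
    (hz : ∀ i, z i = (a i + ε i) / (1 - B i i)) (hk : ∀ i, 0 ≤ k i) (hsol : z ≤ (1 - D) *ᵥ k)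
    (hΞ : ∀ i j, |Ξ i j| ≤ B i j) (hι : ∀ i, |ι i| ≤ a i) (i : n) :
    -(1 + Ξ i i) * k i + (∑ j ∈ univ.erase i, |Ξ i j| * k j) + |ι i| ≤ -ε i := by
  have hgain : a i + ε i ≤ ((1 - B) *ᵥ k) i := by
    have hrow := hsol i
    rwa [hz, one_sub_mulVec_apply_eq_div (hB i).ne (hD i),
      div_le_div_iff_of_pos_right (sub_pos.mpr (hB i))] at hrow
  calc -(1 + Ξ i i) * k i + (∑ j ∈ univ.erase i, |Ξ i j| * k j) + |ι i|
      ≤ -((1 - B) *ᵥ k) i + a i :=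
        add_le_add (neg_one_add_mul_add_sum_abs_le_neg_one_sub_mulVec hk (hΞ i)) (hι i)
    _ ≤ -ε i := by linarith

end

/-- Per-axis gain inequality of Theorem 1 (static gain SMC): any nonnegative
solution `k` of `(I - D) k = z` satisfies, for every axis `i` and any admissible
uncertainties `Ξ` (with `|Ξ i j| ≤ B i j`) and `ι` (with `|ι i| ≤ a i`),
`-(1 + Ξ i i) * k i + ∑_{j ≠ i} |Ξ i j| * k j + |ι i| ≤ -ε i`. -/
theorem stmt_2 (B : Matrix (Fin 3) (Fin 3) ℝ) (a ε : Fin 3 → ℝ)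
    (hB : ∀ i j, 0 ≤ B i j) (hBii : ∀ i, B i i < 1)
    (ha : ∀ i, 0 ≤ a i) (hε : ∀ i, 0 < ε i)
    (D : Matrix (Fin 3) (Fin 3) ℝ)
    (hD : ∀ i j, D i j = if i = j then 0 else B i j / (1 - B i i))
    (z : Fin 3 → ℝ) (hz : ∀ i, z i = (a i + ε i) / (1 - B i i))
    (k : Fin 3 → ℝ) (hk : ∀ i, 0 ≤ k i) (hsol : (1 - D).mulVec k = z)
    (Ξ : Matrix (Fin 3) (Fin 3) ℝ) (hΞ : ∀ i j, |Ξ i j| ≤ B i j)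
    (ι : Fin 3 → ℝ) (hι : ∀ i, |ι i| ≤ a i) :
    ∀ i, -(1 + Ξ i i) * k i + (∑ j ∈ Finset.univ.erase i, |Ξ i j| * k j) + |ι i|
      ≤ -ε i :=
  stmt_2_general hBii hD hz hk hsol.ge hΞ hι
end

section
/- Let B, a, ε, D, z be as in the gain-design setup, and let k ∈ ℝ³ with k_i ≥ 0 for all i satisfy (I − D)k = z. Let Ξ be any 3×3 real matrix with |Ξ_ij| ≤ B_ij for all i, j, and let ι ∈ ℝ³ satisfy |ι_i| ≤ a_i for all i. Then for every s ∈ ℝ³: ⟨s, ι − (I + Ξ)·diag(k)·sgn(s)⟩ ≤ −Σ_{i=1}^{3} ε_i |s_i|; in particular this quantity is strictly negative whenever s ≠ 0. -/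
open Matrix

/-!
Multiplying row `i` of `(I - D) k ≥ z` by `1 - B i i > 0` puts the gain condition into the
undivided form `(I - B) k ≥ a + ε`. Along `ṡ = ι - (I + Ξ) diag(k) sgn(s)`, the nominal part of the
switching term contributes exactly `-k i |s i|` to `s i * ṡ i`, and the uncertain part, because
`|k j sgn(s j)| ≤ k j`, at most `(a i + (B k) i) |s i|`. Each coordinate therefore decreases at rate
at least `ε i |s i|`.
-/

namespace SlidingMode

section Algebra

variable {m n R K : Type*} [Fintype n]

theorem abs_mulVec_apply_le [Ring R] [LinearOrder R] [IsStrictOrderedRing R]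
    {A B : Matrix m n R} {v w : n → R} {i : m} (hA : ∀ j, |A i j| ≤ B i j)
    (hv : ∀ j, |v j| ≤ w j) : |(A *ᵥ v) i| ≤ (B *ᵥ w) i :=
  (Finset.abs_sum_le_sum_abs _ _).trans <| Finset.sum_le_sum fun j _ => by
    rw [abs_mul]
    exact mul_le_mul (hA j) (hv j) (abs_nonneg _) ((abs_nonneg _).trans (hA j))

theorem sum_mul_abs_pos [Ring R] [LinearOrder R] [IsStrictOrderedRing R]
    {ε s : n → R} (hε : ∀ i, 0 < ε i) (hs : s ≠ 0) : 0 < ∑ i, ε i * |s i| := by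
  obtain ⟨i, hi⟩ := Function.ne_iff.mp hs
  exact Finset.sum_pos' (fun j _ => mul_nonneg (hε j).le (abs_nonneg _))
    ⟨i, Finset.mem_univ i, mul_pos (hε i) (abs_pos.mpr hi)⟩

variable [DecidableEq n] [Field K]

/-- The matrix `D` of the gain-design equation `(I - D) k = z`: the off-diagonal part of the
uncertainty bound `B`, with row `i` divided by the diagonal margin `1 - B i i`. -/
def gainCoupling (B : Matrix n n K) : Matrix n n K :=
  of fun i j => if i = j then 0 else B i j / (1 - B i i)

theorem diagonal_mul_one_sub_gainCoupling {B : Matrix n n K} (hB : ∀ i, B i i ≠ 1) :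
    diagonal (fun i => 1 - B i i) * (1 - gainCoupling B) = 1 - B := by
  ext i j
  have hi : 1 - B i i ≠ 0 := sub_ne_zero.mpr (hB i).symm
  rw [diagonal_mul, Matrix.sub_apply, Matrix.sub_apply, gainCoupling, of_apply]
  obtain rfl | hij := eq_or_ne i j
  · simp
  · rw [if_neg hij, one_apply_ne hij, zero_sub, zero_sub, mul_neg, mul_div_cancel₀ _ hi]

theorem one_sub_mulVec_apply_eq {B : Matrix n n K} (hB : ∀ i, B i i ≠ 1) (k : n → K) (i : n) :
    ((1 - B) *ᵥ k) i = (1 - B i i) * ((1 - gainCoupling B) *ᵥ k) i := by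
  rw [← diagonal_mul_one_sub_gainCoupling hB, ← mulVec_mulVec, mulVec_diagonal]

theorem le_one_sub_mulVec_iff [LinearOrder K] [IsStrictOrderedRing K] {B : Matrix n n K}
    (hB : ∀ i, B i i < 1) {k : n → K} {c : K} {i : n} :
    c ≤ ((1 - B) *ᵥ k) i ↔ c / (1 - B i i) ≤ ((1 - gainCoupling B) *ᵥ k) i := by
  rw [one_sub_mulVec_apply_eq fun i => (hB i).ne, div_le_iff₀' (sub_pos.mpr (hB i))]

end Algebra

theorem abs_realSign_le_one (x : ℝ) : |Real.sign x| ≤ 1 := by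
  obtain h | h | h := Real.sign_apply_eq x <;> simp [h]

theorem self_mul_realSign (x : ℝ) : x * Real.sign x = |x| := by
  obtain h | rfl | h := lt_trichotomy x 0
  · rw [Real.sign_of_neg h, abs_of_neg h, mul_neg_one]
  · simp
  · rw [Real.sign_of_pos h, abs_of_pos h, mul_one]

variable {n : Type*} [Fintype n] [DecidableEq n]

/-- The velocity `ṡ = ι - (I + Ξ) diag(k) sgn(s)` of the sliding variable `s` under the switching
control with static gains `k`, where `ι` is the matched disturbance and `Ξ` the uncertainty of the
input matrix. -/
noncomputable def slidingVelocity (Ξ : Matrix n n ℝ) (ι k s : n → ℝ) : n → ℝ :=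
  ι - ((1 + Ξ) * diagonal k) *ᵥ fun i => Real.sign (s i)

theorem slidingVelocity_apply (Ξ : Matrix n n ℝ) (ι k s : n → ℝ) (i : n) :
    slidingVelocity Ξ ι k s i =
      ι i - k i * Real.sign (s i) - (Ξ *ᵥ fun j => k j * Real.sign (s j)) i := by
  have hdiag : (diagonal k *ᵥ fun j => Real.sign (s j)) = fun j => k j * Real.sign (s j) :=
    funext fun j => mulVec_diagonal _ _ j
  rw [slidingVelocity, ← mulVec_mulVec, hdiag, add_mulVec, one_mulVec, Pi.sub_apply, Pi.add_apply,
    sub_add_eq_sub_sub]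

variable {B Ξ : Matrix n n ℝ} {a ε ι k : n → ℝ}

theorem mul_slidingVelocity_le (hk : ∀ i, 0 ≤ k i) {i : n} (hΞ : ∀ j, |Ξ i j| ≤ B i j)
    (hι : |ι i| ≤ a i) (s : n → ℝ) :
    s i * slidingVelocity Ξ ι k s i ≤ (a i - ((1 - B) *ᵥ k) i) * |s i| := by
  set u : n → ℝ := fun j => k j * Real.sign (s j) with hu
  have hu_le (j : n) : |u j| ≤ k j := by
    rw [hu, abs_mul, abs_of_nonneg (hk j)]
    exact mul_le_of_le_one_right (hk j) (abs_realSign_le_one _)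
  have huncertain : |ι i - (Ξ *ᵥ u) i| ≤ a i + (B *ᵥ k) i :=
    (abs_sub _ _).trans (add_le_add hι (abs_mulVec_apply_le hΞ hu_le))
  have hperturbation : s i * (ι i - (Ξ *ᵥ u) i) ≤ |s i| * (a i + (B *ᵥ k) i) :=
    (le_abs_self _).trans <| by rw [abs_mul]; gcongr
  calc s i * slidingVelocity Ξ ι k s i
      = s i * (ι i - (Ξ *ᵥ u) i) - k i * (s i * Real.sign (s i)) := by
        rw [slidingVelocity_apply]; ring
    _ ≤ |s i| * (a i + (B *ᵥ k) i) - k i * |s i| := by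
        rw [self_mul_realSign]
        gcongr
    _ = (a i - ((1 - B) *ᵥ k) i) * |s i| := by
        rw [sub_mulVec, one_mulVec, Pi.sub_apply]; ring

theorem dotProduct_slidingVelocity_le (hk : ∀ i, 0 ≤ k i)
    (hgain : ∀ i, a i + ε i ≤ ((1 - B) *ᵥ k) i)
    (hΞ : ∀ i j, |Ξ i j| ≤ B i j) (hι : ∀ i, |ι i| ≤ a i) (s : n → ℝ) :
    s ⬝ᵥ slidingVelocity Ξ ι k s ≤ -∑ i, ε i * |s i| := by
  rw [← Finset.sum_neg_distrib]
  refine Finset.sum_le_sum fun i _ => (mul_slidingVelocity_le hk (hΞ i) (hι i) s).trans ?_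
  rw [← neg_mul]
  gcongr
  linarith [hgain i]

end SlidingMode

open SlidingMode

theorem stmt_4_general {n : Type*} [Fintype n] [DecidableEq n] {B : Matrix n n ℝ} {a ε : n → ℝ}
    (hBii : ∀ i, B i i < 1) (hε : ∀ i, 0 < ε i) {k : n → ℝ} (hk : ∀ i, 0 ≤ k i)
    (hgain : ∀ i, (a i + ε i) / (1 - B i i) ≤ ((1 - gainCoupling B) *ᵥ k) i)
    {Ξ : Matrix n n ℝ} (hΞ : ∀ i j, |Ξ i j| ≤ B i j) {ι : n → ℝ} (hι : ∀ i, |ι i| ≤ a i)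
    (s : n → ℝ) :
    s ⬝ᵥ slidingVelocity Ξ ι k s ≤ -∑ i, ε i * |s i| ∧
      (s ≠ 0 → s ⬝ᵥ slidingVelocity Ξ ι k s < 0) := by
  have hdecrease : s ⬝ᵥ slidingVelocity Ξ ι k s ≤ -∑ i, ε i * |s i| :=
    dotProduct_slidingVelocity_le hk (fun i => (le_one_sub_mulVec_iff hBii).mpr (hgain i)) hΞ hι s
  exact ⟨hdecrease, fun hs => hdecrease.trans_lt (neg_lt_zero.mpr (sum_mul_abs_pos hε hs))⟩

/-- Core Lyapunov-decrease inequality of Theorem 1 (static gain SMC): for any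
nonnegative solution `k` of `(I - D) k = z` and any admissible uncertainties
`Ξ`, `ι`, every `s ∈ ℝ³` satisfies
`⟨s, ι - (I + Ξ) diag(k) sgn(s)⟩ ≤ -∑ i ε i |s i|`, which is strictly negative
whenever `s ≠ 0`. -/
theorem stmt_4 (B : Matrix (Fin 3) (Fin 3) ℝ) (a ε : Fin 3 → ℝ)
    (hB : ∀ i j, 0 ≤ B i j) (hBii : ∀ i, B i i < 1)
    (ha : ∀ i, 0 ≤ a i) (hε : ∀ i, 0 < ε i)
    (D : Matrix (Fin 3) (Fin 3) ℝ)
    (hD : ∀ i j, D i j = if i = j then 0 else B i j / (1 - B i i))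
    (z : Fin 3 → ℝ) (hz : ∀ i, z i = (a i + ε i) / (1 - B i i))
    (k : Fin 3 → ℝ) (hk : ∀ i, 0 ≤ k i) (hsol : (1 - D).mulVec k = z)
    (Ξ : Matrix (Fin 3) (Fin 3) ℝ) (hΞ : ∀ i j, |Ξ i j| ≤ B i j)
    (ι : Fin 3 → ℝ) (hι : ∀ i, |ι i| ≤ a i) :
    ∀ s : Fin 3 → ℝ,
      s ⬝ᵥ (ι - ((1 + Ξ) * Matrix.diagonal k).mulVec (fun i => Real.sign (s i)))
          ≤ -∑ i, ε i * |s i| ∧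
        (s ≠ 0 →
          s ⬝ᵥ (ι - ((1 + Ξ) * Matrix.diagonal k).mulVec (fun i => Real.sign (s i)))
            < 0) := by
  obtain rfl : D = gainCoupling B := Matrix.ext hD
  exact stmt_4_general hBii hε hk (fun i => by rw [hsol, hz]) hΞ hι
end

section
/- Let B, a, ε, D, z be as in the gain-design setup, and let k_d ∈ ℝ³ with k_{d,i} ≥ 0 for all i satisfy (I − D)k_d = z. Let Ξ be any 3×3 real matrix with |Ξ_ij| ≤ B_ij for all i, j, and let ι ∈ ℝ³ satisfy |ι_i| ≤ a_i for all i. Then for every s ∈ ℝ³ and every k ∈ ℝ³ with 0 ≤ k_i ≤ k_{d,i} for all i: ⟨s, ι − (I + Ξ)·diag(k)·sgn(s)⟩ + Σ_{i=1}^{3} (1 − B_ii)·(k_i − k_{d,i})·|s_i| ≤ −Σ_{i=1}^{3} ε_i |s_i|. -/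
open Matrix

/-!
Row `i` of `1 - D` is row `i` of `1 - B` divided by `1 - B i i > 0`, so `z ≤ (1 - D) kd`
says that `a + ε ≤ (1 - B) kd`. In row `i`, the uncertain dynamics contribute at most
`|s i| * (a - (1 - B) k) i`, and the adaptation term contributes
`|s i| * (1 - B i i) * (k i - kd i)`. Since `1 - B` has nonpositive off-diagonal entries and
`k ≤ kd`, these add up to at most `|s i| * (a - (1 - B) kd) i ≤ -ε i * |s i|`.
-/

section DotProduct

variable {n R : Type*} [Fintype n] [Ring R]

theorem abs_dotProduct_le_dotProduct [LinearOrder R] [IsOrderedRing R] {v w a b : n → R}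
    (hv : ∀ i, |v i| ≤ a i) (hw : ∀ i, |w i| ≤ b i) : |v ⬝ᵥ w| ≤ a ⬝ᵥ b := by
  refine (Finset.abs_sum_le_sum_abs _ _).trans (Finset.sum_le_sum fun i _ => ?_)
  rw [abs_mul]
  exact mul_le_mul (hv i) (hw i) (abs_nonneg _) ((abs_nonneg _).trans (hv i))

theorem dotProduct_le_mul_of_forall_ne_nonpos [PartialOrder R] [IsOrderedRing R]
    {v w : n → R} {i : n} (hv : ∀ j, j ≠ i → v j ≤ 0) (hw : ∀ j, j ≠ i → 0 ≤ w j) :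
    v ⬝ᵥ w ≤ v i * w i := by
  classical
  rw [dotProduct, ← Finset.add_sum_erase _ _ (Finset.mem_univ i)]
  refine add_le_of_nonpos_right (Finset.sum_nonpos fun j hj => ?_)
  have hji : j ≠ i := Finset.ne_of_mem_erase hj
  exact mul_nonpos_of_nonpos_of_nonneg (hv j hji) (hw j hji)

end DotProduct

section RowEstimates

variable {n R : Type*} [Fintype n] [DecidableEq n] [CommRing R] [LinearOrder R] [IsOrderedRing R]

theorem one_sub_mulVec_le_mul_of_nonneg {B : Matrix n n R} {w : n → R} {i : n}
    (hB : ∀ j, j ≠ i → 0 ≤ B i j) (hw : ∀ j, j ≠ i → 0 ≤ w j) :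
    ((1 - B) *ᵥ w) i ≤ (1 - B i i) * w i := by
  have hoff : ∀ j, j ≠ i → (1 - B) i j ≤ 0 := fun j hj => by
    simpa only [Matrix.sub_apply, one_apply_ne hj.symm, zero_sub, neg_nonpos] using hB j hj
  calc ((1 - B) *ᵥ w) i
      ≤ (1 - B) i i * w i := dotProduct_le_mul_of_forall_ne_nonpos hoff hw
    _ = (1 - B i i) * w i := by rw [Matrix.sub_apply, one_apply_eq]

theorem mul_sub_one_add_mulVec_le {B Ξ : Matrix n n R} {a k ι w : n → R} {x : R} {i : n}
    (hΞ : ∀ j, |Ξ i j| ≤ B i j) (hι : |ι i| ≤ a i) (hw : ∀ j, |w j| ≤ k j)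
    (hxw : x * w i = |x| * k i) :
    x * (ι i - ((1 + Ξ) *ᵥ w) i) ≤ |x| * (a i - ((1 - B) *ᵥ k) i) := by
  have hdisturbance : |ι i - (Ξ *ᵥ w) i| ≤ a i + (B *ᵥ k) i :=
    (abs_sub _ _).trans (add_le_add hι (abs_dotProduct_le_dotProduct hΞ hw))
  calc x * (ι i - ((1 + Ξ) *ᵥ w) i)
      = x * (ι i - (Ξ *ᵥ w) i) - x * w i := by
        rw [add_mulVec, one_mulVec, Pi.add_apply]
        ring
    _ ≤ |x| * (a i + (B *ᵥ k) i) - |x| * k i := by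
        rw [hxw]
        refine sub_le_sub_right ((le_abs_self _).trans ?_) _
        rw [abs_mul]
        exact mul_le_mul_of_nonneg_left hdisturbance (abs_nonneg x)
    _ = |x| * (a i - ((1 - B) *ᵥ k) i) := by
        rw [sub_mulVec, one_mulVec, Pi.sub_apply]
        ring

end RowEstimates

theorem one_sub_mulVec_eq_div {n K : Type*} [Fintype n] [DecidableEq n] [Field K]
    {B D : Matrix n n K} {i : n} (hB : B i i ≠ 1)
    (hD : ∀ j, D i j = if i = j then 0 else B i j / (1 - B i i)) (x : n → K) :
    ((1 - D) *ᵥ x) i = ((1 - B) *ᵥ x) i / (1 - B i i) := by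
  have hpivot : 1 - B i i ≠ 0 := sub_ne_zero.mpr hB.symm
  have hrow : ∀ j, (1 - D) i j = (1 - B) i j / (1 - B i i) := fun j => by
    rcases eq_or_ne i j with rfl | hij
    · simp only [Matrix.sub_apply, one_apply_eq, hD, if_true, sub_zero, div_self hpivot]
    · simp only [Matrix.sub_apply, one_apply_ne hij, hD, if_neg hij, zero_sub, neg_div]
  simp only [mulVec, dotProduct, hrow, Finset.sum_div, div_mul_eq_mul_div]

theorem abs_real_sign_le_one (x : ℝ) : |Real.sign x| ≤ 1 := by
  rcases Real.sign_apply_eq x with hx | hx | hx <;> rw [hx] <;> norm_num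

theorem self_mul_real_sign (x : ℝ) : x * Real.sign x = |x| := by
  rcases lt_trichotomy x 0 with hx | rfl | hx
  · rw [Real.sign_of_neg hx, abs_of_neg hx, mul_neg_one]
  · rw [zero_mul, abs_zero]
  · rw [Real.sign_of_pos hx, abs_of_pos hx, mul_one]

-- The conditions on `v` are those of a Filippov selection of `sgn s`.
theorem stmt_8_general {n K : Type*} [Fintype n] [DecidableEq n] [Field K] [LinearOrder K]
    [IsStrictOrderedRing K] {B D Ξ : Matrix n n K} {a ε z kd ι s v k : n → K}
    (hBii : ∀ i, B i i < 1)
    (hD : ∀ i j, D i j = if i = j then 0 else B i j / (1 - B i i))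
    (hz : ∀ i, z i = (a i + ε i) / (1 - B i i)) (hsol : ∀ i, z i ≤ ((1 - D) *ᵥ kd) i)
    (hΞ : ∀ i j, |Ξ i j| ≤ B i j) (hι : ∀ i, |ι i| ≤ a i)
    (hv : ∀ i, |v i| ≤ 1) (hsv : ∀ i, s i * v i = |s i|) (hk : ∀ i, 0 ≤ k i ∧ k i ≤ kd i) :
    s ⬝ᵥ (ι - ((1 + Ξ) * diagonal k) *ᵥ v) + ∑ i, (1 - B i i) * (k i - kd i) * |s i|
      ≤ -∑ i, ε i * |s i| := by
  rw [dotProduct, ← Finset.sum_add_distrib, ← Finset.sum_neg_distrib, ← mulVec_mulVec]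
  refine Finset.sum_le_sum fun i _ => ?_
  have hdesign : a i + ε i ≤ ((1 - B) *ᵥ kd) i := by
    have hi := hsol i
    rwa [hz, one_sub_mulVec_eq_div (hBii i).ne (hD i),
      div_le_div_iff_of_pos_right (sub_pos.mpr (hBii i))] at hi
  have hcontrol : ∀ j, |(diagonal k *ᵥ v) j| ≤ k j := fun j => by
    rw [mulVec_diagonal, abs_mul, abs_of_nonneg (hk j).1]
    exact mul_le_of_le_one_right (hk j).1 (hv j)
  have hdynamics : s i * (ι i - ((1 + Ξ) *ᵥ diagonal k *ᵥ v) i)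
      ≤ |s i| * (a i - ((1 - B) *ᵥ k) i) :=
    mul_sub_one_add_mulVec_le (hΞ i) (hι i) hcontrol
      (by rw [mulVec_diagonal, mul_left_comm, hsv, mul_comm])
  have hadaptation : ((1 - B) *ᵥ kd) i - ((1 - B) *ᵥ k) i ≤ (1 - B i i) * (kd i - k i) := by
    rw [← Pi.sub_apply, ← mulVec_sub]
    exact one_sub_mulVec_le_mul_of_nonneg (fun j _ => (abs_nonneg _).trans (hΞ i j))
      fun j _ => sub_nonneg.mpr (hk j).2
  have hrate : a i - ((1 - B) *ᵥ k) i + (1 - B i i) * (k i - kd i) ≤ -ε i := by linarith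
  calc s i * (ι i - ((1 + Ξ) *ᵥ diagonal k *ᵥ v) i) + (1 - B i i) * (k i - kd i) * |s i|
      ≤ |s i| * (a i - ((1 - B) *ᵥ k) i + (1 - B i i) * (k i - kd i)) := by linarith
    _ ≤ |s i| * -ε i := mul_le_mul_of_nonneg_left hrate (abs_nonneg _)
    _ = -(ε i * |s i|) := by ring

/-- Core Lyapunov-decrease inequality of Theorem 2 (RASMC): for the static gains
`k_d` solving `(I - D) k_d = z`, admissible uncertainties `Ξ`, `ι`, every
`s ∈ ℝ³`, and adaptive gains `0 ≤ k i ≤ k_d i`,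
`⟨s, ι - (I + Ξ) diag(k) sgn(s)⟩ + ∑ i (1 - B i i)(k i - k_d i)|s i|
  ≤ -∑ i ε i |s i|`. -/
theorem stmt_8 (B : Matrix (Fin 3) (Fin 3) ℝ) (a ε : Fin 3 → ℝ)
    (hB : ∀ i j, 0 ≤ B i j) (hBii : ∀ i, B i i < 1)
    (ha : ∀ i, 0 ≤ a i) (hε : ∀ i, 0 < ε i)
    (D : Matrix (Fin 3) (Fin 3) ℝ)
    (hD : ∀ i j, D i j = if i = j then 0 else B i j / (1 - B i i))
    (z : Fin 3 → ℝ) (hz : ∀ i, z i = (a i + ε i) / (1 - B i i))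
    (kd : Fin 3 → ℝ) (hkd : ∀ i, 0 ≤ kd i) (hsol : (1 - D).mulVec kd = z)
    (Ξ : Matrix (Fin 3) (Fin 3) ℝ) (hΞ : ∀ i j, |Ξ i j| ≤ B i j)
    (ι : Fin 3 → ℝ) (hι : ∀ i, |ι i| ≤ a i) :
    ∀ (s : Fin 3 → ℝ) (k : Fin 3 → ℝ), (∀ i, 0 ≤ k i ∧ k i ≤ kd i) →
      s ⬝ᵥ (ι - ((1 + Ξ) * Matrix.diagonal k).mulVec (fun i => Real.sign (s i)))
          + ∑ i, (1 - B i i) * (k i - kd i) * |s i|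
        ≤ -∑ i, ε i * |s i| := fun _ _ hk =>
  stmt_8_general hBii hD hz (fun i => (congrFun hsol i).ge) hΞ hι
    (fun _ => abs_real_sign_le_one _) (fun _ => self_mul_real_sign _) hk
end

section
/- Let B, a, ε, D, z be as in the gain-design setup, let γ_i > 0 for i = 1,2,3, and let k_d ∈ ℝ³ with k_{d,i} ≥ 0 for all i satisfy (I − D)k_d = z. Let s : ℝ → ℝ³ and k : ℝ → ℝ³ be differentiable, and let Ξ : ℝ → (3×3 real matrices) and ι : ℝ → ℝ³ satisfy |Ξ(t)_ij| ≤ B_ij and |ι(t)_i| ≤ a_i for all t ≥ t₀ and all i, j. Suppose that for all t ≥ t₀: (i) 0 ≤ k_i(t) ≤ k_{d,i} for all i; (ii) s'(t) = ι(t) − (I + Ξ(t))·diag(k(t))·sgn(s(t)); (iii) k_i'(t) = (1 − B_ii)·|s_i(t)|/γ_i if k_i(t) < k_{d,i}, and k_i'(t) = 0 if k_i(t) = k_{d,i}. Then the function V₂(t) = (1/2)‖s(t)‖² + Σ_{i=1}^{3} (γ_i/2)·(k_i(t) − k_{d,i})² is differentiable and satisfies V₂'(t) ≤ −Σ_{i=1}^{3}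 ε_i |s_i(t)| for all t ≥ t₀. -/
open Matrix

/-!
Scaling row `i` of `(1 - D) k_d = z` by `1 - B i i` turns the design equation into
`(1 - B) k_d = a + ε`. Along a trajectory, the bounds on `Ξ` and `ι` give
`s i * s' i ≤ |s i| * (a i - ((1 - B) k) i)`. The adaptation law adds
`|s i| * (1 - B i i) * (k i - k_d i)` to the rate. Since the off-diagonal entries of `1 - B` are
nonpositive and `k ≤ k_d`, this is at most `|s i| * ((1 - B) (k - k_d)) i`: the terms in `k`
cancel, and what is left is `|s i| * (a i - ((1 - B) k_d) i) = -ε i * |s i|`.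
-/

section Matrix

variable {m n R : Type*} [Fintype n]

theorem abs_mulVec_apply_le_mulVec_apply [Ring R] [LinearOrder R] [IsOrderedRing R]
    {M B : Matrix m n R} {x y : n → R} {i : m} (hM : ∀ j, |M i j| ≤ B i j)
    (hx : ∀ j, |x j| ≤ y j) : |(M *ᵥ x) i| ≤ (B *ᵥ y) i :=
  calc |∑ j, M i j * x j| ≤ ∑ j, |M i j * x j| := Finset.abs_sum_le_sum_abs _ _
    _ ≤ ∑ j, B i j * y j := Finset.sum_le_sum fun j _ => by
      rw [abs_mul]
      exact mul_le_mul (hM j) (hx j) (abs_nonneg _) ((abs_nonneg _).trans (hM j))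

theorem apply_mul_le_mulVec_apply [Semiring R] [PartialOrder R] [IsOrderedRing R]
    {B : Matrix m n R} {x : n → R} {i : m} (hB : ∀ j, 0 ≤ B i j) (hx : 0 ≤ x) (j : n) :
    B i j * x j ≤ (B *ᵥ x) i :=
  Finset.single_le_sum (f := fun l => B i l * x l) (fun l _ => mul_nonneg (hB l) (hx l))
    (Finset.mem_univ j)

variable [DecidableEq n]

theorem one_sub_diag_mul_sub_le [CommRing R] [LinearOrder R] [IsStrictOrderedRing R]
    {B : Matrix n n R} {x y : n → R} {i : n} (hB : ∀ j, 0 ≤ B i j) (hxy : x ≤ y) :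
    (1 - B i i) * (x i - y i) ≤ ((1 - B) *ᵥ x) i - ((1 - B) *ᵥ y) i := by
  have hdiag := apply_mul_le_mulVec_apply hB (sub_nonneg.2 hxy) i
  simp only [mulVec_sub, sub_mulVec, one_mulVec, Pi.sub_apply] at hdiag ⊢
  linarith

theorem diagonal_one_sub_diag_mul_one_sub [Field R] {B D : Matrix n n R} (hB : ∀ i, B i i ≠ 1)
    (hD : ∀ i j, D i j = if i = j then 0 else B i j / (1 - B i i)) :
    diagonal (1 - B.diag) * (1 - D) = 1 - B := by
  ext i j
  have hBi : 1 - B i i ≠ 0 := sub_ne_zero.2 (hB i).symm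
  rw [diagonal_mul, Matrix.sub_apply, Matrix.sub_apply, hD]
  obtain rfl | hij := eq_or_ne i j
  · simp
  · simp [hij, mul_div_cancel₀ _ hBi]

theorem one_sub_mulVec_eq_of_normalized [Field R] {B D : Matrix n n R} {x z b : n → R}
    (hB : ∀ i, B i i ≠ 1) (hD : ∀ i j, D i j = if i = j then 0 else B i j / (1 - B i i))
    (hz : ∀ i, z i = b i / (1 - B i i)) (hx : (1 - D) *ᵥ x = z) : (1 - B) *ᵥ x = b := by
  rw [← diagonal_one_sub_diag_mul_one_sub hB hD, ← mulVec_mulVec, hx]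
  ext i
  rw [mulVec_diagonal, hz]
  exact mul_div_cancel₀ _ (sub_ne_zero.2 (hB i).symm)

end Matrix

section Rates

variable {n R : Type*} [Fintype n] [DecidableEq n] [CommRing R] [LinearOrder R]
  [IsStrictOrderedRing R] {B Ξ : Matrix n n R} {a ε ι k kd s σ : n → R} {i : n}

theorem mul_slidingRate_le (hΞ : ∀ j, |Ξ i j| ≤ B i j) (hι : |ι i| ≤ a i) (hk : 0 ≤ k)
    (hsσ : s i * σ i = |s i|) (hσ : ∀ j, |σ j| ≤ 1) :
    s i * (ι i - (((1 + Ξ) * diagonal k) *ᵥ σ) i) ≤ |s i| * (a i - ((1 - B) *ᵥ k) i) := by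
  set u := diagonal k *ᵥ σ with hu
  have hu_apply (j : n) : u j = k j * σ j := mulVec_diagonal k σ j
  have hu_le (j : n) : |u j| ≤ k j := by
    rw [hu_apply, abs_mul, abs_of_nonneg (hk j)]
    exact mul_le_of_le_one_right (hk j) (hσ j)
  have hdisturbance : |ι i - (Ξ *ᵥ u) i| ≤ a i + (B *ᵥ k) i :=
    (abs_sub _ _).trans (add_le_add hι (abs_mulVec_apply_le_mulVec_apply hΞ hu_le))
  calc s i * (ι i - (((1 + Ξ) * diagonal k) *ᵥ σ) i)
      = s i * (ι i - (Ξ *ᵥ u) i) - k i * (s i * σ i) := by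
        rw [← mulVec_mulVec, ← hu, add_mulVec, one_mulVec, Pi.add_apply, hu_apply]
        ring
    _ ≤ |s i| * |ι i - (Ξ *ᵥ u) i| - k i * |s i| := by
        rw [hsσ, ← abs_mul]
        gcongr
        exact le_abs_self _
    _ ≤ |s i| * (a i + (B *ᵥ k) i) - k i * |s i| := by gcongr
    _ = |s i| * (a i - ((1 - B) *ᵥ k) i) := by
        rw [sub_mulVec, one_mulVec, Pi.sub_apply]
        ring

theorem slidingRate_add_adaptationRate_le (hgain : a i + ε i ≤ ((1 - B) *ᵥ kd) i)
    (hΞ : ∀ j, |Ξ i j| ≤ B i j) (hι : |ι i| ≤ a i) (hk : 0 ≤ k) (hkkd : k ≤ kd)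
    (hsσ : s i * σ i = |s i|) (hσ : ∀ j, |σ j| ≤ 1) :
    s i * (ι i - (((1 + Ξ) * diagonal k) *ᵥ σ) i) + |s i| * ((1 - B i i) * (k i - kd i))
      ≤ -(ε i * |s i|) := by
  have hB (j : n) : 0 ≤ B i j := (abs_nonneg _).trans (hΞ j)
  calc _ ≤ |s i| * (a i - ((1 - B) *ᵥ k) i)
        + |s i| * (((1 - B) *ᵥ k) i - ((1 - B) *ᵥ kd) i) :=
        add_le_add (mul_slidingRate_le hΞ hι hk hsσ hσ)
          (mul_le_mul_of_nonneg_left (one_sub_diag_mul_sub_le hB hkkd) (abs_nonneg _))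
    _ = |s i| * (a i - ((1 - B) *ᵥ kd) i) := by ring
    _ ≤ |s i| * -ε i := by gcongr; linarith
    _ = -(ε i * |s i|) := by ring

end Rates

theorem gainError_mul_adaptationRate_eq {K : Type*} [Field K] [PartialOrder K]
    {γ b k kd k' : K} (hγ : γ ≠ 0) (hk : k ≤ kd)
    (hadapt : k < kd → k' = b / γ) : γ * (k - kd) * k' = b * (k - kd) := by
  obtain hlt | rfl := hk.lt_or_eq
  · rw [hadapt hlt]
    field_simp
  · simp

/-- The Lyapunov function `V₂` of the sliding variable `s` and the adaptive gains `k`: the energy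
of `s` augmented by the squared deviation of `k` from the design gains `kd`, weighted by `γ`.
The Euclidean norm is written as a sum of squares because `n → ℝ` carries the sup norm. -/
noncomputable def augmentedLyapunov {n : Type*} [Fintype n] (γ kd s k : n → ℝ) : ℝ :=
  (1 / 2) * ∑ i, s i ^ 2 + ∑ i, (γ i / 2) * (k i - kd i) ^ 2

theorem hasDerivAt_augmentedLyapunov {n : Type*} [Fintype n] {γ kd s' k' : n → ℝ}
    {s k : ℝ → n → ℝ} {t : ℝ} (hs : HasDerivAt s s' t) (hk : HasDerivAt k k' t) :
    HasDerivAt (fun τ => augmentedLyapunov γ kd (s τ) (k τ))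
      (∑ i, (s t i * s' i + γ i * (k t i - kd i) * k' i)) t := by
  rw [hasDerivAt_pi] at hs hk
  have hV := ((HasDerivAt.fun_sum fun i (_ : i ∈ Finset.univ) => (hs i).fun_pow 2).const_mul
    (1 / 2)).fun_add (HasDerivAt.fun_sum fun i (_ : i ∈ Finset.univ) =>
      (((hk i).sub_const (kd i)).fun_pow 2).const_mul (γ i / 2))
  refine hV.congr_deriv ?_
  rw [Finset.mul_sum, ← Finset.sum_add_distrib]
  refine Finset.sum_congr rfl fun i _ => ?_
  push_cast
  ring

/-- Sliding solutions are covered by letting `σ` be any selection of the set-valued sign of `s`,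
in place of the single-valued `Real.sign`. -/
theorem stmt_11_general {n : Type*} [Fintype n] [DecidableEq n] {B : Matrix n n ℝ}
    {a ε γ kd : n → ℝ} (hγ : ∀ i, γ i ≠ 0) (hgain : a + ε ≤ (1 - B) *ᵥ kd)
    {t₀ : ℝ} {s k ι σ : ℝ → n → ℝ} {Ξ : ℝ → Matrix n n ℝ}
    (hs : Differentiable ℝ s) (hk : Differentiable ℝ k)
    (hΞ : ∀ t, t₀ ≤ t → ∀ i j, |Ξ t i j| ≤ B i j) (hι : ∀ t, t₀ ≤ t → ∀ i, |ι t i| ≤ a i)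
    (hbound : ∀ t, t₀ ≤ t → ∀ i, 0 ≤ k t i ∧ k t i ≤ kd i)
    (hsσ : ∀ t, t₀ ≤ t → ∀ i, s t i * σ t i = |s t i|)
    (hσ : ∀ t, t₀ ≤ t → ∀ i, |σ t i| ≤ 1)
    (hdyn : ∀ t, t₀ ≤ t → deriv s t = ι t - ((1 + Ξ t) * diagonal (k t)) *ᵥ σ t)
    (hadapt : ∀ t, t₀ ≤ t → ∀ i, k t i < kd i →
      deriv (fun τ => k τ i) t = (1 - B i i) * |s t i| / γ i) :
    Differentiable ℝ (fun t => augmentedLyapunov γ kd (s t) (k t)) ∧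
      ∀ t, t₀ ≤ t →
        deriv (fun t => augmentedLyapunov γ kd (s t) (k t)) t ≤ -∑ i, ε i * |s t i| := by
  have hV (t : ℝ) := hasDerivAt_augmentedLyapunov (γ := γ) (kd := kd)
    (hs t).hasDerivAt (hk t).hasDerivAt
  refine ⟨fun t => (hV t).differentiableAt, fun t ht => ?_⟩
  rw [(hV t).deriv, ← Finset.sum_neg_distrib]
  refine Finset.sum_le_sum fun i _ => ?_
  have hk' : deriv k t i = deriv (fun τ => k τ i) t :=
    (hasDerivAt_pi.1 (hk t).hasDerivAt i).deriv.symm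
  rw [hk', gainError_mul_adaptationRate_eq (hγ i) (hbound t ht i).2 (hadapt t ht i), hdyn t ht,
    mul_comm (1 - B i i), mul_assoc]
  exact slidingRate_add_adaptationRate_le (hgain i) (hΞ t ht i) (hι t ht i)
    (fun j => (hbound t ht j).1) (fun j => (hbound t ht j).2) (hsσ t ht i) (hσ t ht)

/-- Trajectory form of Theorem 2 (RASMC): along any closed-loop trajectory with
the gain adaptation law, the augmented Lyapunov function
`V₂ = (1/2) ‖s‖² + ∑ i (γ i / 2) (k i - k_d i)²` is differentiable and
satisfies `V₂' ≤ -∑ i ε i |s i|` for all `t ≥ t₀`. -/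
theorem stmt_11 (B : Matrix (Fin 3) (Fin 3) ℝ) (a ε γ : Fin 3 → ℝ)
    (hB : ∀ i j, 0 ≤ B i j) (hBii : ∀ i, B i i < 1)
    (ha : ∀ i, 0 ≤ a i) (hε : ∀ i, 0 < ε i) (hγ : ∀ i, 0 < γ i)
    (D : Matrix (Fin 3) (Fin 3) ℝ)
    (hD : ∀ i j, D i j = if i = j then 0 else B i j / (1 - B i i))
    (z : Fin 3 → ℝ) (hz : ∀ i, z i = (a i + ε i) / (1 - B i i))
    (kd : Fin 3 → ℝ) (hkd : ∀ i, 0 ≤ kd i) (hsol : (1 - D).mulVec kd = z)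
    (t₀ : ℝ) (s : ℝ → Fin 3 → ℝ) (hs : Differentiable ℝ s)
    (k : ℝ → Fin 3 → ℝ) (hkdiff : Differentiable ℝ k)
    (Ξ : ℝ → Matrix (Fin 3) (Fin 3) ℝ) (ι : ℝ → Fin 3 → ℝ)
    (hΞ : ∀ t, t₀ ≤ t → ∀ i j, |Ξ t i j| ≤ B i j)
    (hι : ∀ t, t₀ ≤ t → ∀ i, |ι t i| ≤ a i)
    (hbound : ∀ t, t₀ ≤ t → ∀ i, 0 ≤ k t i ∧ k t i ≤ kd i)
    (hdyn : ∀ t, t₀ ≤ t → deriv s t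
      = ι t - ((1 + Ξ t) * Matrix.diagonal (k t)).mulVec (fun i => Real.sign (s t i)))
    (hadapt : ∀ t, t₀ ≤ t → ∀ i,
      (k t i < kd i → deriv (fun τ => k τ i) t = (1 - B i i) * |s t i| / γ i) ∧
      (k t i = kd i → deriv (fun τ => k τ i) t = 0)) :
    Differentiable ℝ
        (fun t => (1 / 2) * ∑ i, (s t i) ^ 2 + ∑ i, (γ i / 2) * (k t i - kd i) ^ 2) ∧
      ∀ t, t₀ ≤ t →
        deriv (fun t => (1 / 2) * ∑ i, (s t i) ^ 2
            + ∑ i, (γ i / 2) * (k t i - kd i) ^ 2) t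
          ≤ -∑ i, ε i * |s t i| := by
  have hgain : (1 - B) *ᵥ kd = a + ε :=
    one_sub_mulVec_eq_of_normalized (fun i => (hBii i).ne) hD hz hsol
  exact stmt_11_general (fun i => (hγ i).ne') hgain.ge hs hkdiff hΞ hι hbound
    (fun t _ i => self_mul_real_sign (s t i)) (fun t _ i => abs_real_sign_le_one (s t i)) hdyn
    fun t ht i => (hadapt t ht i).1
end

section
/- Let v : ℝ → ℝ be differentiable with v(t) ≥ 0 for all t, let c > 0 and t₀ ∈ ℝ, and suppose v'(t) ≤ −c·√(v(t)) for all t ≥ t₀. Then v(t) = 0 for all t ≥ t₀ + 2√(v(t₀))/c. -/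
/-!
While `v` is positive, `v' ≤ -c v ^ α` says that `v ^ (1 - α)` has slope at most `-c (1 - α)`, so
`v` cannot stay positive past time `t₀ + v t₀ ^ (1 - α) / (c (1 - α))`. Once `v` has reached zero it
cannot become positive again, because it would have to cross some level `m > 0` upwards, whereas
its slope there is negative. For `α = 1 / 2` the settling time is `t₀ + 2 √(v t₀) / c`.
-/

section RightDerivative

open Set

variable {v v' : ℝ → ℝ} {a b : ℝ}

theorem le_of_deriv_right_neg_of_lt {m : ℝ} (hcont : ContinuousOn v (Icc a b))
    (hderiv : ∀ x ∈ Ico a b, HasDerivWithinAt v (v' x) (Ici x) x)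
    (hneg : ∀ x ∈ Ico a b, m < v x → v' x < 0) (ha : v a ≤ m) :
    ∀ x ∈ Icc a b, v x ≤ m := by
  intro x hx
  refine le_of_forall_gt_imp_ge_of_dense fun m' hm' ↦ ?_
  exact image_le_of_deriv_right_lt_deriv_boundary (B := fun _ ↦ m') (B' := fun _ ↦ 0)
    hcont hderiv (ha.trans hm'.le) (fun y ↦ hasDerivAt_const y m')
    (fun y hy hvy ↦ hneg y hy (hm'.trans_eq hvy.symm)) hx

theorem rpow_one_sub_le_of_deriv_right_le_rpow {c α : ℝ} (hα : α ≤ 1)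
    (hcont : ContinuousOn v (Icc a b))
    (hderiv : ∀ x ∈ Ico a b, HasDerivWithinAt v (v' x) (Ici x) x)
    (hpos : ∀ x ∈ Ico a b, 0 < v x) (hle : ∀ x ∈ Ico a b, v' x ≤ -c * v x ^ α) :
    ∀ x ∈ Icc a b, v x ^ (1 - α) ≤ v a ^ (1 - α) - c * (1 - α) * (x - a) := by
  have hα' : 0 ≤ 1 - α := sub_nonneg.2 hα
  have hline (x : ℝ) : HasDerivAt (fun y ↦ v a ^ (1 - α) - c * (1 - α) * (y - a))
      (-(c * (1 - α))) x := by
    simpa using (((hasDerivAt_id x).sub_const a).const_mul (c * (1 - α))).const_sub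
      (v a ^ (1 - α))
  have hslope (x : ℝ) (hx : x ∈ Ico a b) :
      v' x * (1 - α) * v x ^ (1 - α - 1) ≤ -(c * (1 - α)) := by
    have hvx := hpos x hx
    calc v' x * (1 - α) * v x ^ (1 - α - 1)
        ≤ -c * v x ^ α * (1 - α) * v x ^ (1 - α - 1) := by gcongr; exact hle x hx
      _ = -(c * (1 - α)) * (v x ^ α * v x ^ (1 - α - 1)) := by ring
      _ = -(c * (1 - α)) := by rw [← Real.rpow_add hvx]; simp
  intro x hx
  exact image_le_of_deriv_right_le_deriv_boundary
    (hcont.rpow_const fun _ _ ↦ Or.inr hα')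
    (fun y hy ↦ (hderiv y hy).rpow_const (Or.inl (hpos y hy).ne'))
    (by simp) (fun y _ ↦ (hline y).continuousAt.continuousWithinAt)
    (fun y _ ↦ (hline y).hasDerivWithinAt) hslope hx

theorem stmt_12_general {c t₀ α : ℝ} (hc : 0 < c) (hα : α < 1)
    (hcont : ContinuousOn v (Ici t₀))
    (hderiv : ∀ t, t₀ ≤ t → HasDerivWithinAt v (v' t) (Ici t) t)
    (hle : ∀ t, t₀ ≤ t → 0 < v t → v' t ≤ -c * v t ^ α) (h₀ : 0 ≤ v t₀) :
    ∀ t, t₀ + v t₀ ^ (1 - α) / (c * (1 - α)) ≤ t → v t ≤ 0 := by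
  intro t ht
  have hrate : 0 < c * (1 - α) := mul_pos hc (sub_pos.2 hα)
  have htt₀ : t₀ ≤ t := le_trans (le_add_of_nonneg_right (by positivity)) ht
  by_contra! hvt
  have hneg : ∀ x, t₀ ≤ x → 0 < v x → v' x < 0 := fun x hx hvx ↦
    (hle x hx hvx).trans_lt
      (mul_neg_of_neg_of_pos (neg_neg_of_pos hc) (Real.rpow_pos_of_pos hvx α))
  have hpos : ∀ x ∈ Icc t₀ t, 0 < v x := by
    intro x hx
    by_contra! hvx
    have hvt_nonpos : v t ≤ 0 := le_of_deriv_right_neg_of_lt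
      (hcont.mono fun y hy ↦ hx.1.trans hy.1) (fun y hy ↦ hderiv y (hx.1.trans hy.1))
      (fun y hy ↦ hneg y (hx.1.trans hy.1)) hvx t ⟨hx.2, le_rfl⟩
    exact hvt.not_ge hvt_nonpos
  have hdecay : v t ^ (1 - α) ≤ v t₀ ^ (1 - α) - c * (1 - α) * (t - t₀) :=
    rpow_one_sub_le_of_deriv_right_le_rpow hα.le (hcont.mono Icc_subset_Ici_self)
      (fun x hx ↦ hderiv x hx.1) (fun x hx ↦ hpos x (Ico_subset_Icc_self hx))
      (fun x hx ↦ hle x hx.1 (hpos x (Ico_subset_Icc_self hx))) t ⟨htt₀, le_rfl⟩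
  have hsettled : v t₀ ^ (1 - α) ≤ (t - t₀) * (c * (1 - α)) :=
    (div_le_iff₀ hrate).1 (le_sub_iff_add_le'.2 ht)
  linarith [Real.rpow_pos_of_pos hvt (1 - α)]

end RightDerivative

/-- Scalar finite-time comparison lemma underlying Theorems 1 and 2: if
`v ≥ 0` is differentiable with `v'(t) ≤ -c √(v t)` for all `t ≥ t₀` and
`c > 0`, then `v(t) = 0` for all `t ≥ t₀ + 2 √(v t₀) / c`. -/
theorem stmt_12 (v : ℝ → ℝ) (hv : Differentiable ℝ v) (hpos : ∀ t, 0 ≤ v t)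
    (c t₀ : ℝ) (hc : 0 < c)
    (hder : ∀ t, t₀ ≤ t → deriv v t ≤ -c * Real.sqrt (v t)) :
    ∀ t, t₀ + 2 * Real.sqrt (v t₀) / c ≤ t → v t = 0 := by
  simp only [Real.sqrt_eq_rpow] at hder ⊢
  refine fun t ht ↦ (stmt_12_general hc one_half_lt_one hv.continuous.continuousOn
    (fun s _ ↦ (hv s).hasDerivAt.hasDerivWithinAt) (fun s hs _ ↦ hder s hs) (hpos t₀) t
    (ht.trans' (le_of_eq ?_))).antisymm (hpos t)
  rw [sub_half]
  field_simp
end
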